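/- For every integer k ≥ 1 and every real s > 1, the derivative of P_k satisfies P_k′(s) = ∑_{j=1}^{k} P_{k−j}(s) P′(js), where P′ denotes the derivative of the prime zeta function P and P_0(s) = 1 by convention. -/

import Mathlib

open MeasureTheory Real

/-- The prime zeta function `P(s) = ∑_p p^{-s}` (sum over all primes). -/
noncomputable def primeZeta (s : ℝ) : ℝ := ∑' p : Nat.Primes, (p.1 : ℝ) ^ (-s)

/-- The set of `k`-almost primes: positive integers with exactly `k` prime
factors counted with multiplicity. -/
def almostPrimes (k : ℕ) : Set ℕ := {n | 0 < n ∧ n.primeFactorsList.length = k}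

/-- `P_k(s) = ∑_{n ∈ N_k} n^{-s}`; note `P_0(s) = 1` since `N_0 = {1}`. -/
noncomputable def Pk (k : ℕ) (s : ℝ) : ℝ := ∑' n : almostPrimes k, (n.1 : ℝ) ^ (-s)

/-- Translated sum `f(A, h) = ∑_{a ∈ A} 1/(a (log a + h))`. -/
noncomputable def transSum (A : Set ℕ) (h : ℝ) : ℝ :=
  ∑' a : A, 1 / ((a.1 : ℝ) * (Real.log a.1 + h))

lemma aux_summable_log {ι : Type*} (f : ι → ℕ) (hf : Function.Injective f)
    (s : ℝ) (hs : 1 < s) :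
    Summable (fun i => Real.log (f i) * (f i : ℝ) ^ (-s)) := by
  have h : Summable (fun n : ℕ => Real.log n * (n : ℝ) ^ (-s)) := by
    have h1 : Summable (fun n : ℕ => (1 / ((s - 1) / 2)) * (n : ℝ) ^ (-((s + 1) / 2))) :=
      (Real.summable_nat_rpow.2 (by linarith)).mul_left _
    refine Summable.of_nonneg_of_le (fun n => ?_) (fun n => ?_) h1
    · exact mul_nonneg (Real.log_natCast_nonneg n) (by positivity)
    · rcases Nat.eq_zero_or_pos n with rfl | hn
      · simp
        have : (0:ℝ) ≤ 0 ^ (-((s + 1) / 2)) := Real.rpow_nonneg le_rfl _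
        have : 0 < s - 1 := by linarith
        positivity
      · have hn' : (0:ℝ) < n := by exact_mod_cast hn
        have h2 := Real.log_le_rpow_div hn'.le (show 0 < (s - 1) / 2 by linarith)
        calc Real.log n * (n : ℝ) ^ (-s)
            ≤ ((n:ℝ) ^ ((s - 1) / 2) / ((s - 1) / 2)) * (n : ℝ) ^ (-s) := by gcongr
          _ = (1 / ((s - 1) / 2)) * ((n:ℝ) ^ ((s - 1) / 2) * (n : ℝ) ^ (-s)) := by ring
          _ = _ := by rw [← Real.rpow_add hn']; congr 2; ring
  exact h.comp_injective hf

lemma aux_summable {ι : Type*} (f : ι → ℕ) (hf : Function.Injective f)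
    (s : ℝ) (hs : 1 < s) : Summable (fun i => (f i : ℝ) ^ (-s)) :=
  (Real.summable_nat_rpow.2 (by linarith : -s < -1)).comp_injective hf

lemma aux_deriv {ι : Type*} (f : ι → ℕ) (hf : Function.Injective f) (hpos : ∀ i, 0 < f i)
    (s : ℝ) (hs : 1 < s) :
    deriv (fun s : ℝ => ∑' i, (f i : ℝ) ^ (-s)) s
      = -∑' i, Real.log (f i) * (f i : ℝ) ^ (-s) := by
  have hb : 1 < (1 + s) / 2 := by linarith
  have h := hasDerivAt_tsum_of_isPreconnected (t := Set.Ioi ((1 + s) / 2))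
    (g := fun i (y : ℝ) => (f i : ℝ) ^ (-y))
    (g' := fun i y => -(Real.log (f i) * (f i : ℝ) ^ (-y))) (y₀ := s) (y := s)
    (aux_summable_log f hf _ hb) isOpen_Ioi isPreconnected_Ioi ?_ ?_
    (by simp only [Set.mem_Ioi]; linarith) (aux_summable f hf s hs)
    (by simp only [Set.mem_Ioi]; linarith)
  · rw [h.deriv, tsum_neg]
  · intro i y _
    have hp : (0:ℝ) < f i := by exact_mod_cast hpos i
    have := (hasDerivAt_neg y).const_rpow (a := (f i : ℝ)) hp
    exact this.congr_deriv (by ring)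
  · intro i y hy
    have hp : (1:ℝ) ≤ f i := by exact_mod_cast hpos i
    have hl := Real.log_natCast_nonneg (f i)
    rw [norm_neg, Real.norm_of_nonneg (by positivity)]
    simp only [Set.mem_Ioi] at hy
    gcongr

lemma mem_ap {k n : ℕ} : n ∈ almostPrimes k ↔ n ≠ 0 ∧ ArithmeticFunction.cardFactors n = k := by
  simp [almostPrimes, ArithmeticFunction.cardFactors_apply, Nat.pos_iff_ne_zero]

lemma mul_mem_ap {k j m p : ℕ} (hp : p.Prime) (hj : j ≤ k) :
    m * p ^ j ∈ almostPrimes k ↔ m ∈ almostPrimes (k - j) := by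
  have hpj : p ^ j ≠ 0 := pow_ne_zero _ hp.ne_zero
  rw [mem_ap, mem_ap]
  constructor
  · rintro ⟨h0, h⟩
    have hm : m ≠ 0 := left_ne_zero_of_mul h0
    rw [ArithmeticFunction.cardFactors_mul hm hpj,
      ArithmeticFunction.cardFactors_apply_prime_pow hp] at h
    exact ⟨hm, by omega⟩
  · rintro ⟨hm, h⟩
    rw [ArithmeticFunction.cardFactors_mul hm hpj,
      ArithmeticFunction.cardFactors_apply_prime_pow hp]
    exact ⟨mul_ne_zero hm hpj, by omega⟩

lemma aux_shift {k j : ℕ} (p : Nat.Primes) (hj : j ≤ k) (g : ℕ → ENNReal) :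
    ∑' n : almostPrimes k, (if p.1 ^ j ∣ n.1 then g n.1 else 0)
      = ∑' m : almostPrimes (k - j), g (m.1 * p.1 ^ j) := by
  have hpj : p.1 ^ j ≠ 0 := pow_ne_zero _ p.2.ne_zero
  let e : almostPrimes (k - j) → almostPrimes k :=
    fun m => ⟨m.1 * p.1 ^ j, (mul_mem_ap p.2 hj).2 m.2⟩
  have he : Function.Injective e := by
    intro a b hab
    have := congrArg Subtype.val hab
    exact Subtype.ext (Nat.eq_of_mul_eq_mul_right (Nat.pos_of_ne_zero hpj) this)
  rw [← he.tsum_eq]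
  · simp [e]
  · intro n hn
    have hd : p.1 ^ j ∣ n.1 := by
      by_contra hd
      simp [hd] at hn
    obtain ⟨c, hc⟩ := hd
    have h2 := n.2
    rw [hc, mul_comm] at h2
    exact ⟨⟨c, (mul_mem_ap p.2 hj).1 h2⟩, Subtype.ext (by simp [e, hc, mul_comm])⟩

lemma aux_log {k n : ℕ} (hn : n ∈ almostPrimes k) :
    ENNReal.ofReal (Real.log n)
      = ∑' p : Nat.Primes, ∑ j ∈ Finset.Icc 1 k,
          if p.1 ^ j ∣ n then ENNReal.ofReal (Real.log p.1) else 0 := by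
  obtain ⟨h0, hk⟩ := mem_ap.1 hn
  have h1 : ∀ p : Nat.Primes, (∑ j ∈ Finset.Icc 1 k,
      if p.1 ^ j ∣ n then ENNReal.ofReal (Real.log p.1) else 0)
      = ENNReal.ofReal (n.factorization p.1 * Real.log p.1) := by
    intro p
    have hle : n.factorization p.1 ≤ k := by
      have hd : p.1 ^ n.factorization p.1 ∣ n := Nat.ordProj_dvd n p.1
      obtain ⟨c, hc⟩ := hd
      have hc0 : c ≠ 0 := by rintro rfl; simp at hc; exact h0 hc
      have := ArithmeticFunction.cardFactors_mul (m := p.1 ^ n.factorization p.1) (n := c)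
        (pow_ne_zero _ p.2.ne_zero) hc0
      rw [← hc, hk, ArithmeticFunction.cardFactors_apply_prime_pow p.2] at this
      omega
    have hf : (Finset.Icc 1 k).filter (fun j => p.1 ^ j ∣ n)
        = Finset.Icc 1 (n.factorization p.1) := by
      ext j
      simp only [Finset.mem_filter, Finset.mem_Icc, p.2.pow_dvd_iff_le_factorization h0]
      omega
    rw [← Finset.sum_filter, hf, Finset.sum_const, Nat.card_Icc, ENNReal.ofReal_mul (by positivity)]
    simp
  simp_rw [h1]
  rw [Real.log_nat_eq_sum_factorization, Finsupp.sum,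
    ENNReal.ofReal_sum_of_nonneg (fun i _ =>
      mul_nonneg (Nat.cast_nonneg _) (Real.log_natCast_nonneg i))]
  rw [← tsum_eq_sum (L := SummationFilter.unconditional ℕ) (s := n.factorization.support)
    (f := fun i : ℕ => ENNReal.ofReal (n.factorization i * Real.log i))]
  · symm
    refine Function.Injective.tsum_eq (g := fun p : Nat.Primes => p.1)
      (f := fun i : ℕ => ENNReal.ofReal (n.factorization i * Real.log i))
      Subtype.val_injective ?_
    intro i hi
    by_cases hp : i.Prime
    · exact ⟨⟨i, hp⟩, rfl⟩
    · simp [Nat.factorization_eq_zero_of_not_prime n hp] at hi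
  · intro b hb
    simp [Finsupp.notMem_support_iff.1 hb]

lemma aux_main (k : ℕ) (s : ℝ) :
    ∑' n : almostPrimes k, ENNReal.ofReal (Real.log n.1 * (n.1 : ℝ) ^ (-s))
      = ∑ j ∈ Finset.Icc 1 k, (∑' m : almostPrimes (k - j), ENNReal.ofReal ((m.1 : ℝ) ^ (-s)))
        * ∑' p : Nat.Primes, ENNReal.ofReal (Real.log p.1 * (p.1 : ℝ) ^ (-((j : ℝ) * s))) := by
  have h1 : ∀ n : almostPrimes k, ENNReal.ofReal (Real.log n.1 * (n.1 : ℝ) ^ (-s))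
      = ∑' p : Nat.Primes, ∑ j ∈ Finset.Icc 1 k,
          if p.1 ^ j ∣ n.1 then
            ENNReal.ofReal (Real.log p.1) * ENNReal.ofReal ((n.1 : ℝ) ^ (-s)) else 0 := by
    intro n
    rw [ENNReal.ofReal_mul (Real.log_natCast_nonneg _), aux_log n.2, ← ENNReal.tsum_mul_right]
    simp_rw [Finset.sum_mul, ite_mul, zero_mul]
  simp_rw [h1]
  rw [ENNReal.tsum_comm]
  have h2 : ∀ p : Nat.Primes, (∑' n : almostPrimes k, ∑ j ∈ Finset.Icc 1 k,
          if p.1 ^ j ∣ n.1 then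
            ENNReal.ofReal (Real.log p.1) * ENNReal.ofReal ((n.1 : ℝ) ^ (-s)) else 0)
      = ∑ j ∈ Finset.Icc 1 k, (∑' m : almostPrimes (k - j), ENNReal.ofReal ((m.1 : ℝ) ^ (-s)))
        * ENNReal.ofReal (Real.log p.1 * (p.1 : ℝ) ^ (-((j : ℝ) * s))) := by
    intro p
    rw [Summable.tsum_finsetSum (fun _ _ => ENNReal.summable)]
    refine Finset.sum_congr rfl fun j hj => ?_
    rw [aux_shift p (Finset.mem_Icc.1 hj).2
      (fun n => ENNReal.ofReal (Real.log p.1) * ENNReal.ofReal ((n : ℝ) ^ (-s))),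
      ← ENNReal.tsum_mul_right]
    refine tsum_congr fun m => ?_
    have key : ((m.1 * p.1 ^ j : ℕ) : ℝ) ^ (-s)
        = (m.1 : ℝ) ^ (-s) * (p.1 : ℝ) ^ (-((j : ℝ) * s)) := by
      push_cast
      rw [Real.mul_rpow (by positivity) (by positivity), ← Real.rpow_natCast,
        ← Real.rpow_mul (by positivity)]
      congr 2
      ring
    rw [key, ENNReal.ofReal_mul (Real.log_natCast_nonneg _), ENNReal.ofReal_mul (by positivity),
      mul_left_comm]
  simp_rw [h2]
  rw [Summable.tsum_finsetSum (fun _ _ => ENNReal.summable)]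
  simp_rw [ENNReal.tsum_mul_left]

/-- For every `k ≥ 1` and real `s > 1`,
`P_k′(s) = ∑_{j=1}^k P_{k−j}(s) P′(js)` (with `P_0 = 1`). -/
theorem stmt_7 (k : ℕ) (hk : 1 ≤ k) (s : ℝ) (hs : 1 < s) :
    deriv (Pk k) s
      = ∑ j ∈ Finset.Icc 1 k, Pk (k - j) s * deriv primeZeta ((j : ℝ) * s) := by
  have hjs : ∀ j ∈ Finset.Icc 1 k, 1 < (j : ℝ) * s := by
    intro j hj
    have : (1:ℝ) ≤ j := by exact_mod_cast (Finset.mem_Icc.1 hj).1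
    nlinarith
  have hL : deriv (Pk k) s = -∑' n : almostPrimes k, Real.log n.1 * (n.1 : ℝ) ^ (-s) :=
    aux_deriv (fun n : almostPrimes k => n.1) Subtype.val_injective (fun n => n.2.1) s hs
  have hR : ∀ j ∈ Finset.Icc 1 k, Pk (k - j) s * deriv primeZeta ((j : ℝ) * s)
      = -(Pk (k - j) s * ∑' p : Nat.Primes, Real.log p.1 * (p.1 : ℝ) ^ (-((j : ℝ) * s))) := by
    intro j hj
    have : deriv primeZeta ((j : ℝ) * s) = _ :=
      aux_deriv (fun n : Nat.Primes => n.1) Subtype.val_injective (fun n => n.2.pos) _ (hjs j hj)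
    rw [this, mul_neg]
  rw [hL, Finset.sum_congr rfl hR, Finset.sum_neg_distrib, neg_inj]
  have hn1 : ∀ (n : ℕ) (t : ℝ), 0 ≤ Real.log n * (n : ℝ) ^ (-t) := fun n t =>
    mul_nonneg (Real.log_natCast_nonneg n) (by positivity)
  have hn2 : ∀ (n : ℕ) (t : ℝ), 0 ≤ (n : ℝ) ^ (-t) := fun n t => by positivity
  have hP : ∀ i, 0 ≤ Pk i s := fun i => tsum_nonneg fun n => hn2 _ _
  have hQ : ∀ t : ℝ, 0 ≤ ∑' p : Nat.Primes, Real.log p.1 * (p.1 : ℝ) ^ (-t) :=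
    fun t => tsum_nonneg fun n => hn1 _ _
  rw [← ENNReal.ofReal_eq_ofReal_iff (tsum_nonneg fun n => hn1 _ _)
    (Finset.sum_nonneg fun j _ => mul_nonneg (hP _) (hQ _)),
    ENNReal.ofReal_tsum_of_nonneg (fun n => hn1 _ _)
      (aux_summable_log (fun n : almostPrimes k => n.1) Subtype.val_injective s hs),
    aux_main, ENNReal.ofReal_sum_of_nonneg (fun j _ => mul_nonneg (hP _) (hQ _))]
  refine Finset.sum_congr rfl fun j hj => ?_
  rw [ENNReal.ofReal_mul (hP _), Pk,
    ENNReal.ofReal_tsum_of_nonneg (fun n => hn2 _ _)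
      (aux_summable (fun n : almostPrimes (k - j) => n.1) Subtype.val_injective s hs),
    ENNReal.ofReal_tsum_of_nonneg (fun n => hn1 _ _)
      (aux_summable_log (fun n : Nat.Primes => n.1) Subtype.val_injective _ (hjs j hj))]
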